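/- arXiv:2509.06416 — 2 statements merged into one kernel-verified Lean document; each statement's English description precedes it below -/
import Mathlib

section
/- Let (X, f_{1,∞}) be an NDS and n ∈ ℕ. Then (X, f_{1,∞}) is strongly multi-transitive if and only if its n-th iterate (X, f_{1,∞}^{[n]}) is strongly multi-transitive. -/
open Set Filter

section NDSDefs

variable {X : Type*}

/-- `nComp f i n` is the composition `f (i+n-1) ∘ ⋯ ∘ f (i+1) ∘ f i`.
Here `f` is the 0-indexed sequence of maps of the NDS (so `f 0` is the paper's `f₁`),
and `nComp f 0 n` is the paper's `f₁ⁿ`. -/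
def nComp (f : ℕ → X → X) (i : ℕ) : ℕ → X → X
  | 0 => id
  | n + 1 => f (i + n) ∘ nComp f i n

/-- The `k`-th iterate NDS `f^{[k]}`: its `n`-th map (0-indexed) is `f_{kn+1}^{k}`
in the paper's notation, i.e. the composition of `k` maps of `f` starting at index `k*n`. -/
def iterNDS (f : ℕ → X → X) (k : ℕ) : ℕ → X → X :=
  fun n => nComp f (k * n) k

/-- The product NDS `f^{[a]} = f^{[a 0]} × ⋯ × f^{[a (r-1)]}` on `Fin r → X`
for a vector `a : Fin r → ℕ`. -/
def vecIter (f : ℕ → X → X) {r : ℕ} (a : Fin r → ℕ) : ℕ → (Fin r → X) → Fin r → X :=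
  fun n x i => iterNDS f (a i) n (x i)

section Topo

variable [TopologicalSpace X]

/-- Topological transitivity of an NDS. -/
def NDSTransitive (f : ℕ → X → X) : Prop :=
  ∀ U V : Set X, IsOpen U → U.Nonempty → IsOpen V → V.Nonempty →
    ∃ n : ℕ, 1 ≤ n ∧ (nComp f 0 n '' U ∩ V).Nonempty

/-- Multi-transitivity of an NDS. -/
def MultiTransitive (f : ℕ → X → X) : Prop :=
  ∀ m : ℕ, 1 ≤ m → ∀ U V : Fin m → Set X,
    (∀ i, IsOpen (U i)) → (∀ i, (U i).Nonempty) →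
    (∀ i, IsOpen (V i)) → (∀ i, (V i).Nonempty) →
    ∃ l : ℕ, 1 ≤ l ∧ ∀ i : Fin m, (nComp f 0 ((i.1 + 1) * l) '' U i ∩ V i).Nonempty

/-- Multi-transitivity of an NDS with respect to a vector `a`. -/
def MultiTransWrt (f : ℕ → X → X) {p : ℕ} (a : Fin p → ℕ) : Prop :=
  ∀ U V : Fin p → Set X,
    (∀ i, IsOpen (U i)) → (∀ i, (U i).Nonempty) →
    (∀ i, IsOpen (V i)) → (∀ i, (V i).Nonempty) →
    ∃ l : ℕ, 1 ≤ l ∧ ∀ i : Fin p, (nComp f 0 (a i * l) '' U i ∩ V i).Nonempty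

/-- Strong multi-transitivity of an NDS: multi-transitivity with respect to every
vector of positive integers. -/
def StronglyMultiTransitive (f : ℕ → X → X) : Prop :=
  ∀ p : ℕ, 1 ≤ p → ∀ a : Fin p → ℕ, (∀ i, 1 ≤ a i) → MultiTransWrt f a

/-- Weak mixing of order `n` of an NDS. -/
def WeaklyMixingOfOrder (f : ℕ → X → X) (n : ℕ) : Prop :=
  ∀ U V : Fin n → Set X,
    (∀ i, IsOpen (U i)) → (∀ i, (U i).Nonempty) →
    (∀ i, IsOpen (V i)) → (∀ i, (V i).Nonempty) →
    ∃ m : ℕ, 1 ≤ m ∧ ∀ i : Fin n, (nComp f 0 m '' U i ∩ V i).Nonempty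

/-- Weak mixing of all orders of an NDS. -/
def WeaklyMixingAllOrders (f : ℕ → X → X) : Prop :=
  ∀ n : ℕ, 2 ≤ n → WeaklyMixingOfOrder f n

/-- Mild mixing of an NDS: the product with any transitive NDS (on a compact
metric space, with continuous maps) is transitive. -/
def MildlyMixing (f : ℕ → X → X) : Prop :=
  ∀ (Y : Type) [MetricSpace Y] [CompactSpace Y] (g : ℕ → Y → Y),
    (∀ n, Continuous (g n)) → NDSTransitive g →
      NDSTransitive (fun n (p : X × Y) => (f n p.1, g n p.2))

/-- Δ-transitivity of an NDS. -/
def DeltaTransitive (f : ℕ → X → X) : Prop :=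
  ∀ m : ℕ, 1 ≤ m → ∃ Y : Set X, Dense Y ∧ IsGδ Y ∧
    ∀ x ∈ Y, Dense {y : Fin m → X | ∃ n : ℕ, 1 ≤ n ∧ y = fun i => nComp f 0 ((i.1 + 1) * n) x}

/-- Δ-mixing of an NDS. -/
def DeltaMixing (f : ℕ → X → X) : Prop :=
  ∀ m : ℕ, 1 ≤ m → ∀ A : Set ℕ, A.Infinite → 0 ∉ A →
    ∃ Y : Set X, Dense Y ∧ IsGδ Y ∧
      ∀ x ∈ Y, Dense {y : Fin m → X | ∃ n ∈ A, y = fun i => nComp f 0 ((i.1 + 1) * n) x}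

/-- The set `N_{f_{1,∞}}(U,V)` of (positive) hitting times. -/
def hitTimes (f : ℕ → X → X) (U V : Set X) : Set ℕ :=
  {n : ℕ | 1 ≤ n ∧ (nComp f 0 n '' U ∩ V).Nonempty}

/-- A set of positive integers is syndetic if it has bounded gaps. -/
def Syndetic (A : Set ℕ) : Prop :=
  ∃ M : ℕ, ∀ i : ℕ, 1 ≤ i → ∃ j ∈ A, i ≤ j ∧ j ≤ i + M

/-- A set of positive integers is thick if it contains arbitrarily long runs. -/
def ThickSet (A : Set ℕ) : Prop :=
  ∀ p : ℕ, ∃ n : ℕ, 1 ≤ n ∧ ∀ j ≤ p, n + j ∈ A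

/-- A set of positive integers is thickly syndetic. -/
def ThicklySyndetic (A : Set ℕ) : Prop :=
  ∀ l : ℕ, Syndetic {m : ℕ | ∀ j ≤ l, m + j ∈ A}

/-- Thick transitivity of an NDS. -/
def ThicklyTransitive (f : ℕ → X → X) : Prop :=
  ∀ U V : Set X, IsOpen U → U.Nonempty → IsOpen V → V.Nonempty →
    ThickSet (hitTimes f U V)

/-- Thickly syndetic transitivity of an NDS. -/
def ThicklySyndeticallyTransitive (f : ℕ → X → X) : Prop :=
  ∀ U V : Set X, IsOpen U → U.Nonempty → IsOpen V → V.Nonempty →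
    ThicklySyndetic (hitTimes f U V)

/-- Total transitivity of an NDS: every iterate `f^{[n]}` is transitive. -/
def TotallyTransitive (f : ℕ → X → X) : Prop :=
  ∀ n : ℕ, 1 ≤ n → NDSTransitive (iterNDS f n)

/-- An NDS is feeble open if each map sends nonempty open sets to sets with
nonempty interior. -/
def FeebleOpen (f : ℕ → X → X) : Prop :=
  ∀ i : ℕ, ∀ U : Set X, IsOpen U → U.Nonempty → (interior (f i '' U)).Nonempty

/-- Strong multi-transitivity of an autonomous system `(X, g)`. -/
def ADSStronglyMultiTransitive (g : X → X) : Prop :=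
  ∀ m : ℕ, 1 ≤ m → ∀ a : Fin m → ℕ, (∀ j, 1 ≤ a j) →
    ∀ U V : Fin m → Set X,
      (∀ j, IsOpen (U j)) → (∀ j, (U j).Nonempty) →
      (∀ j, IsOpen (V j)) → (∀ j, (V j).Nonempty) →
      ∃ l : ℕ, 1 ≤ l ∧ ∀ j : Fin m, (g^[a j * l] '' U j ∩ V j).Nonempty

/-- Δ-transitivity of an autonomous system `(X, g)`. -/
def ADSDeltaTransitive (g : X → X) : Prop :=
  ∀ m : ℕ, 1 ≤ m → ∃ Y : Set X, Dense Y ∧ IsGδ Y ∧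
    ∀ x ∈ Y, Dense {y : Fin m → X | ∃ n : ℕ, 1 ≤ n ∧ y = fun i => g^[(i.1 + 1) * n] x}

/-- Thickly syndetic transitivity of an autonomous system `(X, g)`. -/
def ADSThicklySyndeticallyTransitive (g : X → X) : Prop :=
  ∀ U V : Set X, IsOpen U → U.Nonempty → IsOpen V → V.Nonempty →
    ThicklySyndetic {n : ℕ | 1 ≤ n ∧ (g^[n] '' U ∩ V).Nonempty}

end Topo

section MetricDefs

variable [MetricSpace X]

/-- The compositions `f_r^k` converge collectively to the iterates `g^k`. -/
def CollectiveConvergence (f : ℕ → X → X) (g : X → X) : Prop :=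
  ∀ ε : ℝ, 0 < ε → ∃ r₀ : ℕ, ∀ r ≥ r₀, ∀ k : ℕ, 1 ≤ k → ∀ x : X,
    dist (nComp f r k x) (g^[k] x) < ε

/-- Chain mixing of an NDS. -/
def NDSChainMixing (f : ℕ → X → X) : Prop :=
  ∀ x y : X, ∀ δ : ℝ, 0 < δ → ∃ N : ℕ, 1 ≤ N ∧ ∀ n ≥ N,
    ∃ c : ℕ → X, c 0 = x ∧ c n = y ∧ ∀ i < n, dist (f i (c i)) (c (i + 1)) < δ

/-- Chain transitivity of an NDS. -/
def NDSChainTransitive (f : ℕ → X → X) : Prop :=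
  ∀ x y : X, ∀ δ : ℝ, 0 < δ → ∃ n : ℕ, 1 ≤ n ∧
    ∃ c : ℕ → X, c 0 = x ∧ c n = y ∧ ∀ i < n, dist (f i (c i)) (c (i + 1)) < δ

/-- The shadowing property of an NDS. -/
def NDSShadowing (f : ℕ → X → X) : Prop :=
  ∀ ε : ℝ, 0 < ε → ∃ δ : ℝ, 0 < δ ∧ ∀ n : ℕ, ∀ c : ℕ → X,
    (∀ i < n, dist (f i (c i)) (c (i + 1)) < δ) →
      ∃ z : X, ∀ i ≤ n, dist (nComp f 0 i z) (c i) < ε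

end MetricDefs

end NDSDefs

section NDSIterates

variable {X : Type*}

theorem nComp_add (f : ℕ → X → X) (i m n : ℕ) :
    nComp f i (m + n) = nComp f (i + m) n ∘ nComp f i m := by
  induction n with
  | zero => rfl
  | succ n ih =>
    calc nComp f i (m + n + 1)
      _ = f (i + (m + n)) ∘ nComp f i (m + n) := rfl
      _ = f (i + m + n) ∘ nComp f (i + m) n ∘ nComp f i m := by rw [ih, Nat.add_assoc]

theorem nComp_iterNDS (f : ℕ → X → X) (k i m : ℕ) :
    nComp (iterNDS f k) i m = nComp f (k * i) (k * m) := by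
  induction m with
  | zero => rfl
  | succ m ih =>
    calc nComp (iterNDS f k) i (m + 1)
      _ = nComp f (k * (i + m)) k ∘ nComp (iterNDS f k) i m := rfl
      _ = nComp f (k * i + k * m) k ∘ nComp f (k * i) (k * m) := by rw [ih, Nat.mul_add]
      _ = nComp f (k * i) (k * (m + 1)) := by rw [← nComp_add, Nat.mul_succ]

variable [TopologicalSpace X] {f : ℕ → X → X} {p : ℕ} {a : Fin p → ℕ} {k : ℕ}

theorem multiTransWrt_iterNDS_iff :
    MultiTransWrt (iterNDS f k) a ↔ MultiTransWrt f (fun i ↦ k * a i) := by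
  simp only [MultiTransWrt, nComp_iterNDS, Nat.mul_zero, Nat.mul_assoc]

theorem MultiTransWrt.of_mul_left (hk : 1 ≤ k) (h : MultiTransWrt f (fun i ↦ k * a i)) :
    MultiTransWrt f a := by
  intro U V hU hU' hV hV'
  obtain ⟨l, hl, hit⟩ := h U V hU hU' hV hV'
  refine ⟨k * l, Nat.mul_pos hk hl, fun i ↦ ?_⟩
  simpa only [Nat.mul_assoc, Nat.mul_left_comm (a i)] using hit i

theorem stronglyMultiTransitive_iff_iterate_general (f : ℕ → X → X) (n : ℕ) (hn : 1 ≤ n) :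
    StronglyMultiTransitive f ↔ StronglyMultiTransitive (iterNDS f n) := by
  constructor <;> intro h p hp a ha
  · exact multiTransWrt_iterNDS_iff.2 (h p hp _ fun i ↦ Nat.mul_pos hn (ha i))
  · exact (multiTransWrt_iterNDS_iff.1 (h p hp a ha)).of_mul_left hn

end NDSIterates

/-- an NDS is strongly multi-transitive iff its `n`-th iterate is. -/
theorem stronglyMultiTransitive_iff_iterate {X : Type*} [MetricSpace X] [CompactSpace X]
    (f : ℕ → X → X) (hf : ∀ n, Continuous (f n)) (n : ℕ) (hn : 1 ≤ n) :
    StronglyMultiTransitive f ↔ StronglyMultiTransitive (iterNDS f n) :=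
  stronglyMultiTransitive_iff_iterate_general f n hn
end

section
/- Let (X, f_{1,∞}) and (Y, g_{1,∞}) be NDS such that f_{1,∞} is topologically semi-conjugate to g_{1,∞} via a continuous surjection h : X → Y with g_n ∘ h = h ∘ f_n for every n ∈ ℕ. If f_{1,∞} is Δ-mixing, then g_{1,∞} is Δ-mixing. -/
open Set Filter

/-!
A continuous map `h` with dense range that intertwines `f` and `g` carries points with dense
diagonal orbit under `f` to points with dense diagonal orbit under `g`, so the latter are dense as
soon as the former are. The image under `h` of a Gδ set need not be Gδ; instead, the set of *all*
points with dense diagonal orbit under `g` is Gδ, because density need only be tested on a countable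
basis.
-/

section DenseImage

variable {ι X Z : Type*} [TopologicalSpace X] [TopologicalSpace Z]

theorem isGδ_setOf_dense_image [SecondCountableTopology Z] {F : ι → X → Z}
    {A : Set ι} (hF : ∀ i ∈ A, Continuous (F i)) :
    IsGδ {x | Dense ((fun i => F i x) '' A)} := by
  let B := TopologicalSpace.countableBasis Z
  have dense_iff_basis (x : X) :
      Dense ((fun i => F i x) '' A) ↔ ∀ U ∈ B, ∃ i ∈ A, F i x ∈ U := by
    rw [(TopologicalSpace.isBasis_countableBasis Z).dense_iff]
    refine forall₂_congr fun U hU => ?_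
    rw [forall_prop_of_true (TopologicalSpace.nonempty_of_mem_countableBasis hU),
      inter_nonempty_iff_exists_right, exists_mem_image]
  have eq_biInter : {x | Dense ((fun i => F i x) '' A)} = ⋂ U ∈ B, ⋃ i ∈ A, F i ⁻¹' U := by
    ext x
    simp only [mem_ofPred_eq, dense_iff_basis, mem_iInter, mem_iUnion,
      mem_preimage, exists_prop]
  rw [eq_biInter]
  refine .biInter_of_isOpen (TopologicalSpace.countable_countableBasis Z) fun U hU => ?_
  exact isOpen_biUnion fun i hi =>
    (TopologicalSpace.isOpen_of_mem_countableBasis hU).preimage (hF i hi)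

end DenseImage

section NComp

variable {X Y : Type*}

theorem continuous_nComp [TopologicalSpace X] {f : ℕ → X → X} (hf : ∀ n, Continuous (f n))
    (i n : ℕ) : Continuous (nComp f i n) := by
  induction n with
  | zero => exact continuous_id
  | succ n ih => exact (hf (i + n)).comp ih

theorem semiconj_nComp {f : ℕ → X → X} {g : ℕ → Y → Y} {h : X → Y}
    (hfg : ∀ n, Function.Semiconj h (f n) (g n)) (i n : ℕ) :
    Function.Semiconj h (nComp f i n) (nComp g i n) := by
  induction n with
  | zero => exact .id_right
  | succ n ih => exact (hfg (i + n)).comp_right ih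

end NComp

section DeltaOrbit

variable {X Y : Type*}

/-- The diagonal iterate `(f₁ⁿ(x), f₁²ⁿ(x), …, f₁ᵐⁿ(x))`, whose coordinate `i : Fin m` is the
paper's coordinate `i + 1`. -/
def deltaIter (f : ℕ → X → X) (m n : ℕ) (x : X) : Fin m → X :=
  fun i => nComp f 0 ((i.1 + 1) * n) x

/-- The diagonal orbit of `x` along the set of times `A`: the set whose density in `X ^ m` is
required in the definition of Δ-mixing. -/
def deltaOrbit (f : ℕ → X → X) (m : ℕ) (A : Set ℕ) (x : X) : Set (Fin m → X) :=
  {y | ∃ n ∈ A, y = deltaIter f m n x}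

theorem deltaOrbit_eq_image (f : ℕ → X → X) (m : ℕ) (A : Set ℕ) (x : X) :
    deltaOrbit f m A x = (fun n => deltaIter f m n x) '' A := by
  simp only [deltaOrbit, image, eq_comm]

theorem continuous_deltaIter [TopologicalSpace X] {f : ℕ → X → X} (hf : ∀ n, Continuous (f n))
    (m n : ℕ) : Continuous (deltaIter f m n) :=
  continuous_pi fun _ => continuous_nComp hf 0 _

theorem isGδ_setOf_dense_deltaOrbit [TopologicalSpace X] [SecondCountableTopology X]
    {f : ℕ → X → X} (hf : ∀ n, Continuous (f n)) (m : ℕ) (A : Set ℕ) :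
    IsGδ {x | Dense (deltaOrbit f m A x)} := by
  simp only [deltaOrbit_eq_image]
  exact isGδ_setOf_dense_image fun n _ => continuous_deltaIter hf m n

variable {f : ℕ → X → X} {g : ℕ → Y → Y} {h : X → Y}

theorem piMap_deltaIter (hfg : ∀ n, Function.Semiconj h (f n) (g n)) (m n : ℕ) (x : X) :
    Pi.map (fun _ => h) (deltaIter f m n x) = deltaIter g m n (h x) :=
  funext fun _ => semiconj_nComp hfg 0 _ x

theorem image_piMap_deltaOrbit (hfg : ∀ n, Function.Semiconj h (f n) (g n)) (m : ℕ) (A : Set ℕ)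
    (x : X) : Pi.map (fun _ => h) '' deltaOrbit f m A x = deltaOrbit g m A (h x) := by
  simp only [deltaOrbit_eq_image, image_image, piMap_deltaIter hfg]

variable [TopologicalSpace X] [TopologicalSpace Y]

theorem dense_deltaOrbit_of_semiconj (hc : Continuous h) (hd : DenseRange h)
    (hfg : ∀ n, Function.Semiconj h (f n) (g n)) {m : ℕ} {A : Set ℕ} {x : X}
    (hx : Dense (deltaOrbit f m A x)) : Dense (deltaOrbit g m A (h x)) := by
  rw [← image_piMap_deltaOrbit hfg]
  exact (DenseRange.piMap fun _ => hd).dense_image (.piMap fun _ => hc) hx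

end DeltaOrbit

theorem semiconj_deltaMixing_general {X Y : Type*} [TopologicalSpace X] [TopologicalSpace Y]
    [SecondCountableTopology Y] {f : ℕ → X → X} {g : ℕ → Y → Y} (hg : ∀ n, Continuous (g n))
    {h : X → Y} (hc : Continuous h) (hd : DenseRange h)
    (hfg : ∀ n, Function.Semiconj h (f n) (g n)) (hf : DeltaMixing f) : DeltaMixing g := by
  intro m hm A hA h0
  obtain ⟨D, hD, -, hDorbit⟩ := hf m hm A hA h0
  have maps_dense : MapsTo h D {y | Dense (deltaOrbit g m A y)} :=
    fun x hx => dense_deltaOrbit_of_semiconj hc hd hfg (hDorbit x hx)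
  exact ⟨{y | Dense (deltaOrbit g m A y)}, hd.dense_of_mapsTo hc hD maps_dense,
    isGδ_setOf_dense_deltaOrbit hg m A, fun _ hy => hy⟩

/-- Δ-mixing is preserved by topological semi-conjugacy. -/
theorem semiconj_deltaMixing {X : Type*} [MetricSpace X] [CompactSpace X]
    {Y : Type*} [MetricSpace Y] [CompactSpace Y]
    (f : ℕ → X → X) (hf : ∀ n, Continuous (f n))
    (g : ℕ → Y → Y) (hg : ∀ n, Continuous (g n))
    (h : X → Y) (hc : Continuous h) (hs : Function.Surjective h)
    (hsemi : ∀ n : ℕ, ∀ x : X, g n (h x) = h (f n x))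
    (hfdm : DeltaMixing f) : DeltaMixing g :=
  semiconj_deltaMixing_general hg hc hs.denseRange (fun n x => (hsemi n x).symm) hfdm
end
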